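/- Let h̃₀(x,ξ) := −Σ_{η∈ℤ^d} ã_η(x) cosh(η·ξ) − V₀(x) with ã and V₀ as follows: each ã_η smooth, ã_η(x) ≤ 0 for η ≠ 0, ã_η(x) = ã_{−η}(x), span{η : ã_η(x) < 0} = ℝ^d, Σ_η e^{c|η|} sup_{x∈K}|∂_x^β ã_η(x)| < ∞ for all c > 0, compact K, multi-index β; V₀ ∈ C^∞(ℝ^d), V₀ ≥ 0 with V₀(x) = 0 only at x = 0. Let ℓ be the Finsler function of h̃₀ at energy 0 (ℓ(x,v) = ξ_{h̃₀}(x, λ(x,v)v)·v with ξ_{h̃₀}(x,·) = (∇_ξ h̃₀(x,·))^{-1} and λ(x,v) > 0 unique with h̃₀(x, ξ_{h̃₀}(x, λ(x,v)v)) = 0). Let Ω ⊂ ℝ^d \ {0} be open and φ ∈ C^∞(Ω) solve the eikonal equation h̃₀(x, ∇φ(x)) = 0 for all x ∈ Ω. Let γ₀ : [−T, 0] → Ω be a C¹ curve with γ̇₀(t) = ∇_ξ h̃₀(γ₀(t), ∇φ(γ₀(t))) and γ̇₀(t) ≠ 0 for all t. Then φ(γ₀(0)) − φ(γ₀(−T))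 = ∫_{−T}^0 ℓ(γ₀(t), γ̇₀(t)) dt. -/

import Mathlib

open scoped RealInnerProductSpace Classical
noncomputable section

/-- `ℝ^d` as a Euclidean space. -/
abbrev Ed (d : ℕ) := EuclideanSpace ℝ (Fin d)

/-- The lattice vector `η ∈ ℤ^d` regarded as a vector of `ℝ^d`. -/
def zv {d : ℕ} (η : Fin d → ℤ) : Ed d :=
  (EuclideanSpace.equiv (Fin d) ℝ).symm (fun i => (η i : ℝ))

/-!
Let `γ` be the curve and `v` its velocity. The chain rule gives `(φ ∘ γ)' = ⟪∇φ, v⟫`, so it is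
enough to see that the Finsler function at `v` equals `⟪∇φ, v⟫`. At each base point the covector
defining `ℓ(x, v)` and the covector `∇φ` lie on the same energy level, and the `ξ`-gradients of the
Hamiltonian there are positive multiples of `v`. Convexity of the sublevel set then makes both of
them maximizers of `⟪·, v⟫` on it, so the two pairings agree. For `h̃₀` this convexity holds because
the terms `-ã_η(x) cosh(η·ξ)` with `η ≠ 0` are nonnegative multiples of convex functions of `ξ`.
-/

section SupportingHyperplane

variable {E : Type*} [NormedAddCommGroup E] [InnerProductSpace ℝ E] [CompleteSpace E]
  {f : E → ℝ} {K : Set E} {g p q v : E} {c e : ℝ}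

theorem hasGradientAt_of_gradient_eq_of_ne_zero (hg : gradient f p = g) (hg0 : g ≠ 0) :
    HasGradientAt f g p := by
  have hf : DifferentiableAt ℝ f p := by
    by_contra hf
    exact hg0 (hg.symm.trans (gradient_eq_zero_of_not_differentiableAt hf))
  exact hg ▸ hf.hasGradientAt

theorem isMaxOn_inner_of_isLocalMaxOn_of_hasGradientAt (hK : Convex ℝ K) (hp : p ∈ K)
    (hmax : IsLocalMaxOn f K p) (hg : HasGradientAt f g p) : IsMaxOn (fun q => ⟪q, g⟫) K p := by
  intro q hq
  have hle : ⟪g, q - p⟫ ≤ 0 := hmax.hasFDerivWithinAt_nonpos hg.hasFDerivAt.hasFDerivWithinAt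
    (sub_mem_posTangentConeAt_of_segment_subset (hK.segment_subset hp hq))
  rw [real_inner_comm, inner_sub_left] at hle
  exact sub_nonpos.mp hle

theorem isMaxOn_inner_sublevel_of_hasGradientAt_smul (hconv : Convex ℝ {q | f q ≤ e})
    (hp : f p = e) (hc : 0 < c) (hg : HasGradientAt f (c • v) p) :
    IsMaxOn (fun q => ⟪q, v⟫) {q | f q ≤ e} p := by
  have hmax : IsMaxOn f {q | f q ≤ e} p := fun q hq => hp ▸ hq
  intro q hq
  have hle : ⟪q, c • v⟫ ≤ ⟪p, c • v⟫ :=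
    isMaxOn_inner_of_isLocalMaxOn_of_hasGradientAt hconv hp.le hmax.localize hg hq
  rw [real_inner_smul_right, real_inner_smul_right] at hle
  exact le_of_mul_le_mul_left hle hc

theorem inner_eq_of_hasGradientAt_of_hasGradientAt_smul (hconv : Convex ℝ {q | f q ≤ e})
    (hp : f p = e) (hgp : HasGradientAt f v p) (hq : f q = e) (hc : 0 < c)
    (hgq : HasGradientAt f (c • v) q) : ⟪q, v⟫ = ⟪p, v⟫ := by
  have hgp' : HasGradientAt f ((1 : ℝ) • v) p := by rwa [one_smul]
  exact le_antisymm
    (isMaxOn_inner_sublevel_of_hasGradientAt_smul hconv hp one_pos hgp' hq.le)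
    (isMaxOn_inner_sublevel_of_hasGradientAt_smul hconv hq hc hgq hp.le)

end SupportingHyperplane

section CoshSeries

open Set

theorem convexOn_cosh : ConvexOn ℝ univ Real.cosh :=
  Monotone.convexOn_univ_of_deriv Real.differentiable_cosh
    (Real.deriv_cosh ▸ Real.sinh_strictMono.monotone)

theorem cosh_le_exp_abs (x : ℝ) : Real.cosh x ≤ Real.exp |x| := by
  rw [← Real.cosh_abs, Real.cosh_eq]
  linarith [Real.exp_le_exp.2 (neg_le_self (abs_nonneg x))]

theorem convexOn_tsum {ι E : Type*} [AddCommGroup E] [Module ℝ E] {s : Set E} {f : ι → E → ℝ}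
    (hs : Convex ℝ s) (hf : ∀ i, ConvexOn ℝ s (f i)) (hsum : ∀ x ∈ s, Summable fun i => f i x) :
    ConvexOn ℝ s fun x => ∑' i, f i x := by
  refine ⟨hs, fun x hx y hy a b ha hb hab => ?_⟩
  have hx' := (hsum x hx).const_smul a
  have hy' := (hsum y hy).const_smul b
  calc ∑' i, f i (a • x + b • y) ≤ ∑' i, (a • f i x + b • f i y) :=
        (hsum _ (hs hx hy ha hb hab)).tsum_le_tsum (fun i => (hf i).2 hx hy ha hb hab)
          (hx'.add hy')
    _ = a • ∑' i, f i x + b • ∑' i, f i y := by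
        rw [hx'.tsum_add hy', (hsum x hx).tsum_const_smul, (hsum y hy).tsum_const_smul]

variable {ι E : Type*} [NormedAddCommGroup E] [InnerProductSpace ℝ E] {w : ι → E} {b M : ι → ℝ}

theorem summable_mul_cosh_inner {c : ℝ} {ξ : E} (hξ : ‖ξ‖ ≤ c) (hb : ∀ i, ‖b i‖ ≤ M i)
    (hM : Summable fun i => Real.exp (c * ‖w i‖) * M i) :
    Summable fun i => b i * Real.cosh ⟪w i, ξ⟫ := by
  refine hM.of_norm_bounded fun i => ?_
  have hinner : |⟪w i, ξ⟫| ≤ c * ‖w i‖ :=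
    calc |⟪w i, ξ⟫| ≤ ‖w i‖ * ‖ξ‖ := abs_real_inner_le_norm _ _
      _ ≤ c * ‖w i‖ := by rw [mul_comm]; gcongr
  calc ‖b i * Real.cosh ⟪w i, ξ⟫‖ = Real.cosh ⟪w i, ξ⟫ * ‖b i‖ := by
        rw [norm_mul, mul_comm, Real.norm_of_nonneg (Real.cosh_pos _).le]
    _ ≤ Real.exp (c * ‖w i‖) * M i := by
        gcongr
        · exact (cosh_le_exp_abs _).trans (Real.exp_le_exp.2 hinner)
        · exact hb i

theorem convexOn_neg_mul_cosh_inner {r : ℝ} {u : E} (hr : u ≠ 0 → r ≤ 0) :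
    ConvexOn ℝ univ fun ξ : E => -(r * Real.cosh ⟪u, ξ⟫) := by
  rcases eq_or_ne u 0 with rfl | hu
  · simpa only [inner_zero_left] using convexOn_const _ convex_univ
  · simpa [Function.comp_def] using
      (convexOn_cosh.comp_linearMap (innerₛₗ ℝ u)).smul (neg_nonneg.2 (hr hu))

theorem convexOn_neg_tsum_mul_cosh_inner_sub (hb : ∀ i, w i ≠ 0 → b i ≤ 0)
    (hdecay : ∀ c > 0, ∃ M : ι → ℝ, (∀ i, ‖b i‖ ≤ M i) ∧
      Summable fun i => Real.exp (c * ‖w i‖) * M i) (r : ℝ) :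
    ConvexOn ℝ univ fun ξ : E => -(∑' i, b i * Real.cosh ⟪w i, ξ⟫) - r := by
  have hsum (ξ : E) : Summable fun i => b i * Real.cosh ⟪w i, ξ⟫ := by
    obtain ⟨M, hbM, hM⟩ := hdecay (‖ξ‖ + 1) (by positivity)
    exact summable_mul_cosh_inner (le_add_of_nonneg_right zero_le_one) hbM hM
  simp only [← tsum_neg, sub_eq_add_neg]
  exact (convexOn_tsum convex_univ (fun i => convexOn_neg_mul_cosh_inner (hb i))
    fun ξ _ => (hsum ξ).neg).add_const (-r)

end CoshSeries

theorem zv_zero {d : ℕ} : zv (0 : Fin d → ℤ) = 0 := by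
  ext i
  simp [zv]

section FinslerFunction

open Set

variable {E : Type*} [NormedAddCommGroup E] [InnerProductSpace ℝ E] [CompleteSpace E]
  {H ℓ : E → E → ℝ} {e : ℝ} {Ω : Set E}

/-- `ℓ` is a Finsler function over `Ω` of the Hamiltonian `H` at energy `e`: `ℓ x v = ⟪ξ, v⟫` for
some covector `ξ` of energy `e` at which the fibre gradient of `H` is a positive multiple of `v`.
Such a `ξ` plays the role of `ξ_H(x, λ(x, v) v)`, without a global inverse of the fibre
gradient; `ℓ x 0` is left unconstrained. -/
def IsFinslerFunctionOn (H : E → E → ℝ) (e : ℝ) (Ω : Set E) (ℓ : E → E → ℝ) : Prop :=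
  ∀ x ∈ Ω, ∀ v ≠ 0, ∃ ξ, ∃ c : ℝ, 0 < c ∧
    HasGradientAt (H x) (c • v) ξ ∧ H x ξ = e ∧ ℓ x v = ⟪ξ, v⟫

theorem isFinslerFunctionOn_of_gradient_rightInverse {ξh : E → E → E} {lam : E → E → ℝ}
    (hξh : ∀ x v, gradient (H x) (ξh x v) = v)
    (hlam : ∀ x ∈ Ω, ∀ v ≠ 0, 0 < lam x v ∧ H x (ξh x (lam x v • v)) = e)
    (hℓ : ∀ x ∈ Ω, ∀ v ≠ 0, ℓ x v = ⟪ξh x (lam x v • v), v⟫) :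
    IsFinslerFunctionOn H e Ω ℓ := by
  intro x hx v hv
  obtain ⟨hpos, henergy⟩ := hlam x hx v hv
  exact ⟨_, _, hpos, hasGradientAt_of_gradient_eq_of_ne_zero (hξh x _) (smul_ne_zero hpos.ne' hv),
    henergy, hℓ x hx v hv⟩

theorem IsFinslerFunctionOn.eq_inner (hℓ : IsFinslerFunctionOn H e Ω ℓ) {x p v : E} (hx : x ∈ Ω)
    (hconv : Convex ℝ {ξ | H x ξ ≤ e}) (hv : v ≠ 0) (hp : H x p = e)
    (hgp : HasGradientAt (H x) v p) : ℓ x v = ⟪p, v⟫ := by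
  obtain ⟨ξ, c, hc, hgξ, hξ, hℓξ⟩ := hℓ x hx v hv
  rw [hℓξ]
  exact inner_eq_of_hasGradientAt_of_hasGradientAt_smul hconv hp hgp hξ hc hgξ

theorem stmt15_general (hconv : ∀ x ∈ Ω, Convex ℝ {ξ | H x ξ ≤ e})
    (hℓ : IsFinslerFunctionOn H e Ω ℓ)
    {φ : E → ℝ} {gφ : E → E} (hφ : ContDiffOn ℝ 1 φ Ω)
    (hgφ : ∀ x ∈ Ω, HasGradientAt φ (gφ x) x) (heik : ∀ x ∈ Ω, H x (gφ x) = e)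
    {a b : ℝ} (hab : a ≤ b) {γ : ℝ → E} (hγ : ContDiffOn ℝ 1 γ (Icc a b))
    (hγΩ : MapsTo γ (Icc a b) Ω)
    (hflow : ∀ t ∈ Icc a b, HasDerivAt γ (gradient (H (γ t)) (gφ (γ t))) t)
    (hreg : ∀ t ∈ Icc a b, gradient (H (γ t)) (gφ (γ t)) ≠ 0) :
    φ (γ b) - φ (γ a) = ∫ t in a..b, ℓ (γ t) (gradient (H (γ t)) (gφ (γ t))) := by
  have hderiv : ∀ t ∈ Icc a b,
      deriv (φ ∘ γ) t = ℓ (γ t) (gradient (H (γ t)) (gφ (γ t))) := by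
    intro t ht
    have hx := hγΩ ht
    calc deriv (φ ∘ γ) t = ⟪gφ (γ t), gradient (H (γ t)) (gφ (γ t))⟫ :=
          ((hgφ _ hx).hasFDerivAt.comp_hasDerivAt t (hflow t ht)).deriv
      _ = ℓ (γ t) (gradient (H (γ t)) (gφ (γ t))) :=
          (hℓ.eq_inner hx (hconv _ hx) (hreg t ht) (heik _ hx)
            (hasGradientAt_of_gradient_eq_of_ne_zero rfl (hreg t ht))).symm
  calc φ (γ b) - φ (γ a) = ∫ t in a..b, deriv (φ ∘ γ) t :=
        (intervalIntegral.integral_deriv_of_contDiffOn_Icc (hφ.comp hγ hγΩ) hab).symm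
    _ = ∫ t in a..b, ℓ (γ t) (gradient (H (γ t)) (gφ (γ t))) :=
        intervalIntegral.integral_congr fun t ht => hderiv t (uIcc_of_le hab ▸ ht)

end FinslerFunction

/-- From the proof of Theorem 1.5: along a base integral curve `γ₀` of the Hamiltonian
vector field of `h̃₀` lying in the Lagrangian graph `{(x, ∇φ(x))}` inside the zero energy
shell (`φ` a smooth solution of the eikonal equation `h̃₀(x,∇φ(x)) = 0` on `Ω`), the
increment of `φ` equals the Finsler length: `φ(γ₀(0)) - φ(γ₀(-T)) = ∫ ℓ(γ₀, γ̇₀) dt`. -/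
theorem stmt15 (d : ℕ) (a : (Fin d → ℤ) → Ed d → ℝ) (V₀ : Ed d → ℝ)
    (hsm : ∀ η : Fin d → ℤ, ContDiff ℝ (⊤ : ℕ∞) (a η))
    (hneg : ∀ η : Fin d → ℤ, η ≠ 0 → ∀ x : Ed d, a η x ≤ 0)
    (heven : ∀ (η : Fin d → ℤ) (x : Ed d), a η x = a (-η) x)
    (hspan : ∀ x : Ed d,
      Submodule.span ℝ {w : Ed d | ∃ η : Fin d → ℤ, a η x < 0 ∧ w = zv η} = ⊤)
    (hdecay : ∀ c : ℝ, 0 < c → ∀ K : Set (Ed d), IsCompact K → ∀ n : ℕ,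
      ∃ M : (Fin d → ℤ) → ℝ,
        (∀ η : Fin d → ℤ, ∀ x ∈ K, ‖iteratedFDeriv ℝ n (a η) x‖ ≤ M η) ∧
        Summable (fun η : Fin d → ℤ => Real.exp (c * ‖zv η‖) * M η))
    (hVsm : ContDiff ℝ (⊤ : ℕ∞) V₀)
    (hVpos : ∀ x : Ed d, 0 ≤ V₀ x)
    (hVzero : ∀ x : Ed d, V₀ x = 0 ↔ x = 0)
    (h0 : Ed d → Ed d → ℝ)
    (hh0 : ∀ x ξ : Ed d,
      h0 x ξ = -(∑' η : Fin d → ℤ, a η x * Real.cosh ⟪zv η, ξ⟫) - V₀ x)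
    (ξh : Ed d → Ed d → Ed d)
    (hξh1 : ∀ x v : Ed d, gradient (h0 x) (ξh x v) = v)
    (hξh2 : ∀ x ξ : Ed d, ξh x (gradient (h0 x) ξ) = ξ)
    (lam : Ed d → Ed d → ℝ)
    (hlam : ∀ x : Ed d, x ≠ 0 → ∀ v : Ed d, v ≠ 0 →
      0 < lam x v ∧ h0 x (ξh x (lam x v • v)) = 0)
    (ℓ : Ed d → Ed d → ℝ)
    (hℓ : ∀ x v : Ed d,
      ℓ x v = if x = 0 ∨ v = 0 then 0 else ⟪ξh x (lam x v • v), v⟫)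
    (Ω : Set (Ed d)) (hΩopen : IsOpen Ω) (hΩ0 : (0 : Ed d) ∉ Ω)
    (φ : Ed d → ℝ) (hφsm : ContDiffOn ℝ (⊤ : ℕ∞) φ Ω)
    (gφ : Ed d → Ed d)
    (hgφ : ∀ x ∈ Ω, HasGradientAt φ (gφ x) x)
    (heik : ∀ x ∈ Ω, h0 x (gφ x) = 0)
    (T : ℝ) (hT : 0 < T)
    (γ₀ : ℝ → Ed d)
    (hγC1 : ContDiffOn ℝ 1 γ₀ (Set.Icc (-T) 0))
    (hγΩ : ∀ t ∈ Set.Icc (-T) (0:ℝ), γ₀ t ∈ Ω)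
    (hγflow : ∀ t ∈ Set.Icc (-T) (0:ℝ),
      HasDerivAt γ₀ (gradient (h0 (γ₀ t)) (gφ (γ₀ t))) t)
    (hγreg : ∀ t ∈ Set.Icc (-T) (0:ℝ), gradient (h0 (γ₀ t)) (gφ (γ₀ t)) ≠ 0) :
    φ (γ₀ 0) - φ (γ₀ (-T))
      = ∫ t in (-T)..(0:ℝ), ℓ (γ₀ t) (gradient (h0 (γ₀ t)) (gφ (γ₀ t))) := by
  have hconv (x : Ed d) : ConvexOn ℝ Set.univ (h0 x) := by
    rw [funext (hh0 x)]
    exact convexOn_neg_tsum_mul_cosh_inner_sub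
      (fun η hη => hneg η (fun h => hη (h ▸ zv_zero)) x)
      (fun c hc => by simpa using hdecay c hc {x} isCompact_singleton 0) _
  have hfinsler : IsFinslerFunctionOn h0 0 Ω ℓ := by
    have hne : ∀ x ∈ Ω, x ≠ 0 := fun x hx => ne_of_mem_of_not_mem hx hΩ0
    exact isFinslerFunctionOn_of_gradient_rightInverse hξh1 (fun x hx => hlam x (hne x hx))
      fun x hx v hv => by rw [hℓ, if_neg (not_or_intro (hne x hx) hv)]
  exact stmt15_general (fun x _ => by simpa using (hconv x).convex_le 0) hfinsler
    (hφsm.of_le (by exact_mod_cast le_top)) hgφ heik (by linarith) hγC1 hγΩ hγflow hγreg
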